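/- For every z > 2, E|f_z′(W̄)| ≤ ((1/2) e^{−1/2} + e^{−1}/(2√(2π)) + e^{e − 2}) · e^{−z/2}. -/

import Mathlib

open MeasureTheory ProbabilityTheory Real

/-- The standard normal cumulative distribution function. -/
noncomputable def Phi (z : ℝ) : ℝ :=
  (Real.sqrt (2 * Real.pi))⁻¹ * ∫ u in Set.Iic z, Real.exp (-u ^ 2 / 2)

/-- The bounded solution `f_z` of the Stein equation
`f'(w) - w f(w) = 1{w ≤ z} - Φ(z)`. -/
noncomputable def fz (z w : ℝ) : ℝ :=
  if w ≤ z then Real.sqrt (2 * Real.pi) * Real.exp (w ^ 2 / 2) * Phi w * (1 - Phi z)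
  else Real.sqrt (2 * Real.pi) * Real.exp (w ^ 2 / 2) * Phi z * (1 - Phi w)

/-- The derivative `f_z'`, expressed via the Stein equation. -/
noncomputable def fz' (z w : ℝ) : ℝ :=
  w * fz z w + (if w ≤ z then 1 else 0) - Phi z

/-- The truncation `x̄ᵢ = ξᵢ 1{ξᵢ ≤ 1}`. -/
noncomputable def xbar {Ω : Type*} {n : ℕ} (ξ : Fin n → Ω → ℝ) (i : Fin n) (ω : Ω) : ℝ :=
  if ξ i ω ≤ 1 then ξ i ω else 0

/-- `W̄ = ∑ᵢ x̄ᵢ`. -/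
noncomputable def Wbar {Ω : Type*} {n : ℕ} (ξ : Fin n → Ω → ℝ) (ω : Ω) : ℝ :=
  ∑ i, xbar ξ i ω

/-- `W̄⁽ⁱ⁾ = W̄ - x̄ᵢ`. -/
noncomputable def Wbari {Ω : Type*} {n : ℕ} (ξ : Fin n → Ω → ℝ) (i : Fin n) (ω : Ω) : ℝ :=
  Wbar ξ ω - xbar ξ i ω

/-- `K̄ᵢ(t) = E[x̄ᵢ (1{0 ≤ t ≤ x̄ᵢ} - 1{x̄ᵢ ≤ t < 0})]`. -/
noncomputable def Kbar {Ω : Type*} [MeasureSpace Ω] {n : ℕ} (ξ : Fin n → Ω → ℝ)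
    (i : Fin n) (t : ℝ) : ℝ :=
  ∫ ω, xbar ξ i ω * ((if 0 ≤ t ∧ t ≤ xbar ξ i ω then (1 : ℝ) else 0)
    - (if xbar ξ i ω ≤ t ∧ t < 0 then (1 : ℝ) else 0))

/-- `β₂ = ∑ᵢ E[ξᵢ² 1{|ξᵢ| > 1}]`. -/
noncomputable def beta2 {Ω : Type*} [MeasureSpace Ω] {n : ℕ} (ξ : Fin n → Ω → ℝ) : ℝ :=
  ∑ i, ∫ ω, (if 1 < |ξ i ω| then (ξ i ω) ^ 2 else 0)

/-- `β₃ = ∑ᵢ E[|ξᵢ|³ 1{|ξᵢ| ≤ 1}]`. -/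
noncomputable def beta3 {Ω : Type*} [MeasureSpace Ω] {n : ℕ} (ξ : Fin n → Ω → ℝ) : ℝ :=
  ∑ i, ∫ ω, (if |ξ i ω| ≤ 1 then |ξ i ω| ^ 3 else 0)

/-!
A sum of independent variables bounded above by `1` has an exponential moment controlled by its
first two moments (Bennett's inequality), so `E exp W̄ ≤ exp (e - 2)`. Pointwise, `f_z'` is of order
`exp (-z / 2)` on `w ≤ z - 1`, since there the factor `1 - Φ z ≤ φ z / z` beats the growth of
`1 / φ w`. On `w > z - 1` one only has `|f_z'| ≤ 1`, but `1 ≤ exp w * exp (-z / 2)` there. Adding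
the two bounds and taking expectations gives the result.
-/

local notation "φ" => gaussianPDFReal 0 1

section Gaussian

lemma gaussianPDFReal_zero_one (x : ℝ) : φ x = (√(2 * π))⁻¹ * exp (-x ^ 2 / 2) := by
  simp [gaussianPDFReal]

lemma gaussianPDFReal_zero_one_pos (x : ℝ) : 0 < φ x :=
  gaussianPDFReal_pos 0 1 x one_ne_zero

lemma gaussianPDFReal_zero_one_neg (x : ℝ) : φ (-x) = φ x := by
  simp only [gaussianPDFReal_zero_one, neg_sq]

lemma gaussianPDFReal_zero_one_div (x y : ℝ) : φ x / φ y = exp ((y ^ 2 - x ^ 2) / 2) := by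
  rw [gaussianPDFReal_zero_one, gaussianPDFReal_zero_one,
    mul_div_mul_left _ _ (by positivity), ← exp_sub]
  ring_nf

lemma gaussianPDFReal_zero_one_antitoneOn : AntitoneOn φ (Set.Ici 0) := by
  intro x hx y _ hxy
  have hx0 : 0 ≤ x := hx
  rw [gaussianPDFReal_zero_one, gaussianPDFReal_zero_one]
  gcongr

lemma hasDerivAt_gaussianPDFReal_zero_one (x : ℝ) : HasDerivAt φ (-(x * φ x)) x := by
  have hexponent : HasDerivAt (fun u : ℝ ↦ -u ^ 2 / 2) (-x) x := by
    convert! ((hasDerivAt_pow 2 x).neg).div_const 2 using 1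
    ring
  rw [funext gaussianPDFReal_zero_one]
  convert! hexponent.exp.const_mul (√(2 * π))⁻¹ using 1
  ring

lemma integrable_mul_gaussianPDFReal_zero_one : Integrable fun x ↦ x * φ x := by
  convert! (integrable_mul_exp_neg_mul_sq one_half_pos).const_mul (√(2 * π))⁻¹ using 2 with x
  rw [gaussianPDFReal_zero_one]
  ring_nf

lemma integral_Ioi_mul_gaussianPDFReal_zero_one (w : ℝ) :
    ∫ x in Set.Ioi w, x * φ x = φ w := by
  have hderiv (x : ℝ) := hasDerivAt_gaussianPDFReal_zero_one x
  have hint : IntegrableOn (fun x ↦ -(x * φ x)) (Set.Ioi w) :=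
    integrable_mul_gaussianPDFReal_zero_one.neg.integrableOn
  have hlim := tendsto_zero_of_hasDerivAt_of_integrableOn_Ioi (fun x _ ↦ hderiv x) hint
    (integrable_gaussianPDFReal 0 1).integrableOn
  have hFTC := integral_Ioi_of_hasDerivAt_of_tendsto' (fun x _ ↦ hderiv x) hint hlim
  rw [integral_neg] at hFTC
  linarith

lemma Phi_eq_integral_gaussianPDFReal (z : ℝ) : Phi z = ∫ x in Set.Iic z, φ x := by
  simp only [Phi, gaussianPDFReal_zero_one, integral_const_mul]

lemma Phi_eq_cdf (z : ℝ) : Phi z = cdf (gaussianReal 0 1) z := by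
  rw [Phi_eq_integral_gaussianPDFReal, cdf_eq_real, measureReal_def,
    gaussianReal_apply_eq_integral 0 one_ne_zero,
    ENNReal.toReal_ofReal (integral_nonneg fun x ↦ gaussianPDFReal_nonneg 0 1 x)]

lemma Phi_nonneg (z : ℝ) : 0 ≤ Phi z := by
  rw [Phi_eq_cdf]
  exact cdf_nonneg _ z

lemma Phi_le_one (z : ℝ) : Phi z ≤ 1 := by
  rw [Phi_eq_cdf]
  exact cdf_le_one _ z

lemma monotone_Phi : Monotone Phi := by
  rw [funext Phi_eq_cdf]
  exact monotone_cdf _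

lemma one_sub_Phi_eq_integral (z : ℝ) : 1 - Phi z = ∫ x in Set.Ioi z, φ x := by
  have hint : Integrable φ := integrable_gaussianPDFReal 0 1
  rw [← integral_gaussianPDFReal_eq_one 0 one_ne_zero, Phi_eq_integral_gaussianPDFReal,
    ← intervalIntegral.integral_Iic_add_Ioi (b := z) hint.integrableOn hint.integrableOn,
    add_sub_cancel_left]

lemma Phi_neg (z : ℝ) : Phi (-z) = 1 - Phi z := by
  rw [one_sub_Phi_eq_integral, Phi_eq_integral_gaussianPDFReal]
  simpa only [neg_neg, gaussianPDFReal_zero_one_neg] using integral_comp_neg_Iic (-z) φ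

lemma mul_one_sub_Phi_le (w : ℝ) : w * (1 - Phi w) ≤ φ w :=
  calc w * (1 - Phi w) = ∫ x in Set.Ioi w, w * φ x := by
        rw [one_sub_Phi_eq_integral, integral_const_mul]
    _ ≤ ∫ x in Set.Ioi w, x * φ x :=
        setIntegral_mono_on ((integrable_gaussianPDFReal 0 1).const_mul w).integrableOn
          integrable_mul_gaussianPDFReal_zero_one.integrableOn measurableSet_Ioi
          fun x hx ↦ mul_le_mul_of_nonneg_right (le_of_lt hx) (gaussianPDFReal_nonneg 0 1 x)
    _ = φ w := integral_Ioi_mul_gaussianPDFReal_zero_one w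

/-- The Mills ratio `(1 - Φ w) / φ w` of the standard normal distribution. Both branches of `fz` are
multiples of it, evaluated at `-w` and at `w`. -/
noncomputable def millsRatio (w : ℝ) : ℝ := (1 - Phi w) / φ w

lemma millsRatio_nonneg (w : ℝ) : 0 ≤ millsRatio w :=
  div_nonneg (sub_nonneg.2 (Phi_le_one w)) (gaussianPDFReal_nonneg 0 1 w)

lemma millsRatio_neg (w : ℝ) : millsRatio (-w) = Phi w / φ w := by
  rw [millsRatio, Phi_neg, gaussianPDFReal_zero_one_neg, sub_sub_cancel]

lemma mul_millsRatio_le_one (w : ℝ) : w * millsRatio w ≤ 1 := by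
  rw [millsRatio, ← mul_div_assoc, div_le_one (gaussianPDFReal_zero_one_pos w)]
  exact mul_one_sub_Phi_le w

lemma neg_one_le_mul_millsRatio_neg (w : ℝ) : -1 ≤ w * millsRatio (-w) := by
  linarith [mul_millsRatio_le_one (-w)]

lemma mul_millsRatio_neg_le {w y : ℝ} (hy : 0 ≤ y) (hwy : w ≤ y) :
    w * millsRatio (-w) ≤ y / φ y := by
  have hφy := gaussianPDFReal_zero_one_pos y
  rcases le_total w 0 with hw | hw
  · exact (mul_nonpos_of_nonpos_of_nonneg hw (millsRatio_nonneg _)).trans (by positivity)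
  · have hφ : φ y ≤ φ w := gaussianPDFReal_zero_one_antitoneOn hw hy hwy
    calc w * millsRatio (-w) = w * Phi w / φ w := by rw [millsRatio_neg, mul_div_assoc]
      _ ≤ y * 1 / φ y := by gcongr; exacts [Phi_nonneg w, Phi_le_one w]
      _ = y / φ y := by rw [mul_one]

lemma one_sub_Phi_mul_mul_millsRatio_neg_le {z w : ℝ} (hwz : w ≤ z) :
    (1 - Phi z) * (w * millsRatio (-w)) ≤ Phi z := by
  have hΦz : 0 ≤ 1 - Phi z := sub_nonneg.2 (Phi_le_one z)
  rcases le_total w 0 with hw | hw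
  · exact (mul_nonpos_of_nonneg_of_nonpos hΦz
      (mul_nonpos_of_nonpos_of_nonneg hw (millsRatio_nonneg _))).trans (Phi_nonneg z)
  · have hφw := gaussianPDFReal_zero_one_pos w
    have htail : w * (1 - Phi z) ≤ φ w :=
      calc w * (1 - Phi z) ≤ z * (1 - Phi z) := by gcongr
        _ ≤ φ z := mul_one_sub_Phi_le z
        _ ≤ φ w := gaussianPDFReal_zero_one_antitoneOn hw (hw.trans hwz) hwz
    calc (1 - Phi z) * (w * millsRatio (-w)) = w * (1 - Phi z) / φ w * Phi w := by
          rw [millsRatio_neg]; ring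
      _ ≤ 1 * Phi w := by
          gcongr
          · exact Phi_nonneg w
          · exact (div_le_one hφw).2 htail
      _ ≤ Phi z := by rw [one_mul]; exact monotone_Phi hwz

end Gaussian

section SteinSolution

variable {z w : ℝ}

lemma fz_of_le (h : w ≤ z) : fz z w = (1 - Phi z) * millsRatio (-w) := by
  rw [fz, if_pos h, millsRatio_neg, gaussianPDFReal_zero_one, neg_div, exp_neg]
  field_simp

lemma fz_of_lt (h : z < w) : fz z w = Phi z * millsRatio w := by
  rw [fz, if_neg h.not_ge, millsRatio, gaussianPDFReal_zero_one, neg_div, exp_neg]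
  field_simp

lemma fz'_of_le (h : w ≤ z) : fz' z w = (1 - Phi z) * (1 + w * millsRatio (-w)) := by
  rw [fz', fz_of_le h, if_pos h]
  ring

lemma fz'_of_lt (h : z < w) : fz' z w = -(Phi z * (1 - w * millsRatio w)) := by
  rw [fz', fz_of_lt h, if_neg h.not_ge]
  ring

lemma fz'_nonneg_of_le (h : w ≤ z) : 0 ≤ fz' z w := by
  rw [fz'_of_le h]
  exact mul_nonneg (sub_nonneg.2 (Phi_le_one z)) (by linarith [neg_one_le_mul_millsRatio_neg w])

lemma fz'_nonpos_of_lt (h : z < w) : fz' z w ≤ 0 := by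
  rw [fz'_of_lt h]
  exact neg_nonpos.2 (mul_nonneg (Phi_nonneg z) (by linarith [mul_millsRatio_le_one w]))

lemma abs_fz'_le_one (z w : ℝ) : |fz' z w| ≤ 1 := by
  rcases le_or_gt w z with h | h
  · rw [abs_of_nonneg (fz'_nonneg_of_le h), fz'_of_le h]
    linarith [one_sub_Phi_mul_mul_millsRatio_neg_le h]
  · have hreflect := one_sub_Phi_mul_mul_millsRatio_neg_le (neg_le_neg h.le)
    rw [Phi_neg, sub_sub_cancel, neg_neg] at hreflect
    rw [abs_of_nonpos (fz'_nonpos_of_lt h), fz'_of_lt h]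
    linarith

lemma one_sub_Phi_le_div (hz : 0 < z) : 1 - Phi z ≤ φ z / z := by
  rw [le_div_iff₀ hz, mul_comm]
  exact mul_one_sub_Phi_le z

lemma abs_fz'_le_of_le {y : ℝ} (hy : 0 ≤ y) (hz : 0 < z) (hyz : y ≤ z) (hwy : w ≤ y) :
    |fz' z w| ≤ φ z / z + y / z * exp ((y ^ 2 - z ^ 2) / 2) := by
  have hwz : w ≤ z := hwy.trans hyz
  have hφy := gaussianPDFReal_zero_one_pos y
  calc |fz' z w| = (1 - Phi z) * (1 + w * millsRatio (-w)) := by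
        rw [abs_of_nonneg (fz'_nonneg_of_le hwz), fz'_of_le hwz]
    _ ≤ (1 - Phi z) * (1 + y / φ y) := by
        gcongr
        · exact sub_nonneg.2 (Phi_le_one z)
        · exact mul_millsRatio_neg_le hy hwy
    _ ≤ φ z / z * (1 + y / φ y) := by
        gcongr
        exact one_sub_Phi_le_div hz
    _ = φ z / z + y / z * exp ((y ^ 2 - z ^ 2) / 2) := by
        rw [← gaussianPDFReal_zero_one_div]
        ring

lemma gaussianPDFReal_zero_one_div_self_le (hz : 2 ≤ z) :
    φ z / z ≤ exp (-1) / (2 * √(2 * π)) * exp (-z / 2) :=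
  calc φ z / z = exp (-z ^ 2 / 2) / (z * √(2 * π)) := by
        rw [gaussianPDFReal_zero_one]
        field_simp
    _ ≤ exp (-1 + -z / 2) / (2 * √(2 * π)) := by
        gcongr
        nlinarith
    _ = exp (-1) / (2 * √(2 * π)) * exp (-z / 2) := by
        rw [exp_add]
        ring

lemma sub_one_div_mul_exp_le (hz : 2 ≤ z) :
    (z - 1) / z * exp (((z - 1) ^ 2 - z ^ 2) / 2) ≤ 1 / 2 * exp (-(1 / 2)) * exp (-z / 2) := by
  have hratio : (z - 1) / z ≤ 1 / 2 * exp (z / 2 - 1) := by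
    rw [div_le_iff₀ (by linarith)]
    nlinarith [add_one_le_exp (z / 2 - 1)]
  calc (z - 1) / z * exp (((z - 1) ^ 2 - z ^ 2) / 2)
      ≤ 1 / 2 * exp (z / 2 - 1) * exp (((z - 1) ^ 2 - z ^ 2) / 2) := by gcongr
    _ = 1 / 2 * exp (-(1 / 2)) * exp (-z / 2) := by
        rw [mul_assoc, mul_assoc, ← exp_add, ← exp_add]
        ring_nf

lemma abs_fz'_le_add_exp_mul_exp (hz : 2 ≤ z) (w : ℝ) :
    |fz' z w| ≤ (1 / 2 * exp (-(1 / 2)) + exp (-1) / (2 * √(2 * π)) + exp w) * exp (-z / 2) := by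
  rcases le_or_gt w (z - 1) with hw | hw
  · have hbulk := abs_fz'_le_of_le (by linarith) (by linarith) (sub_le_self z zero_le_one) hw
    have hexp : 0 ≤ exp w * exp (-z / 2) := by positivity
    linarith [gaussianPDFReal_zero_one_div_self_le hz, sub_one_div_mul_exp_le hz]
  · have hexp : 1 ≤ exp w * exp (-z / 2) := by
      rw [← exp_add]
      exact one_le_exp (by linarith)
    have hconst : 0 ≤ (1 / 2 * exp (-(1 / 2)) + exp (-1) / (2 * √(2 * π))) * exp (-z / 2) := by
      positivity
    linarith [abs_fz'_le_one z w]

lemma integral_abs_fz'_le {Ω : Type*} [MeasurableSpace Ω] {μ : Measure Ω}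
    [IsProbabilityMeasure μ] {W : Ω → ℝ} (hW : Integrable (fun ω ↦ exp (W ω)) μ) (hz : 2 ≤ z) :
    ∫ ω, |fz' z (W ω)| ∂μ ≤
      (1 / 2 * exp (-(1 / 2)) + exp (-1) / (2 * √(2 * π)) + ∫ ω, exp (W ω) ∂μ)
        * exp (-z / 2) := by
  set c := 1 / 2 * exp (-(1 / 2)) + exp (-1) / (2 * √(2 * π))
  calc ∫ ω, |fz' z (W ω)| ∂μ ≤ ∫ ω, (c + exp (W ω)) * exp (-z / 2) ∂μ :=
        integral_mono_of_nonneg (ae_of_all _ fun _ ↦ abs_nonneg _)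
          (((integrable_const c).add hW).mul_const _)
          (ae_of_all _ fun ω ↦ abs_fz'_le_add_exp_mul_exp hz (W ω))
    _ = (c + ∫ ω, exp (W ω) ∂μ) * exp (-z / 2) := by
        rw [integral_mul_const, integral_add (integrable_const c) hW, integral_const,
          probReal_univ, one_smul]

end SteinSolution

section Bennett

lemma exp_le_one_add_add_sq_div_two_of_nonpos {s : ℝ} (hs : s ≤ 0) :
    exp s ≤ 1 + s + s ^ 2 / 2 := by
  have hquad : 1 + -s + (-s) ^ 2 / 2 ≤ exp (-s) := quadratic_le_exp_of_nonneg (neg_nonneg.2 hs)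
  have hpos : 0 < 1 + s + s ^ 2 / 2 := by nlinarith [sq_nonneg (s + 1)]
  have hprod : 1 ≤ (1 + s + s ^ 2 / 2) * (1 + -s + (-s) ^ 2 / 2) := by
    nlinarith [sq_nonneg (s ^ 2)]
  rw [← neg_neg s, exp_neg, neg_neg, inv_le_iff_one_le_mul₀ (exp_pos _)]
  exact hprod.trans (mul_le_mul_of_nonneg_left hquad hpos.le)

lemma hasSum_exp_sub_one_sub (x : ℝ) :
    HasSum (fun n : ℕ ↦ x ^ (n + 2) / (n + 2).factorial) (exp x - 1 - x) := by
  have hexp : HasSum (fun n : ℕ ↦ x ^ n / n.factorial) (exp x) := by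
    rw [exp_eq_exp_ℝ]
    exact NormedSpace.expSeries_div_hasSum_exp x
  simpa [Finset.sum_range_succ, sub_sub] using (hasSum_nat_add_iff' 2).2 hexp

lemma sq_mul_exp_sub_one_sub_le {s b : ℝ} (hs : 0 ≤ s) (hsb : s ≤ b) :
    b ^ 2 * (exp s - 1 - s) ≤ s ^ 2 * (exp b - 1 - b) := by
  refine hasSum_le (fun n ↦ ?_) ((hasSum_exp_sub_one_sub s).mul_left (b ^ 2))
    ((hasSum_exp_sub_one_sub b).mul_left (s ^ 2))
  calc b ^ 2 * (s ^ (n + 2) / (n + 2).factorial)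
      = s ^ 2 * (s ^ n * b ^ 2 / (n + 2).factorial) := by ring
    _ ≤ s ^ 2 * (b ^ n * b ^ 2 / (n + 2).factorial) := by gcongr
    _ = s ^ 2 * (b ^ (n + 2) / (n + 2).factorial) := by rw [pow_add b]

lemma exp_le_one_add_add_mul_sq {s b : ℝ} (hb : 0 < b) (hsb : s ≤ b) :
    exp s ≤ 1 + s + (exp b - 1 - b) / b ^ 2 * s ^ 2 := by
  -- `(exp s - 1 - s) / s ^ 2` is increasing in `s`, with limit `1 / 2` at `s = 0`.
  rcases le_total s 0 with hs | hs
  · have hhalf : 1 / 2 ≤ (exp b - 1 - b) / b ^ 2 := by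
      rw [le_div_iff₀ (by positivity)]
      linarith [quadratic_le_exp_of_nonneg hb.le]
    nlinarith [exp_le_one_add_add_sq_div_two_of_nonpos hs,
      mul_le_mul_of_nonneg_right hhalf (sq_nonneg s)]
  · have hdiv : exp s - 1 - s ≤ (exp b - 1 - b) / b ^ 2 * s ^ 2 := by
      rw [div_mul_eq_mul_div, le_div_iff₀ (by positivity), mul_comm, mul_comm _ (s ^ 2)]
      exact sq_mul_exp_sub_one_sub_le hs hsb
    linarith

variable {Ω ι : Type*} [MeasurableSpace Ω] {μ : Measure Ω} {b t : ℝ}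

lemma mgf_le_exp_of_le [IsProbabilityMeasure μ] {X : Ω → ℝ} (hX : MemLp X 2 μ)
    (hXb : ∀ᵐ ω ∂μ, X ω ≤ b) (hb : 0 < b) (ht : 0 < t) :
    mgf X μ t ≤
      exp (t * ∫ ω, X ω ∂μ + (exp (t * b) - 1 - t * b) / b ^ 2 * ∫ ω, X ω ^ 2 ∂μ) := by
  set c := (exp (t * b) - 1 - t * b) / b ^ 2 with hc
  have hlin : Integrable (fun ω ↦ t * X ω) μ := (hX.integrable one_le_two).const_mul t
  have haffine : Integrable (fun ω ↦ 1 + t * X ω) μ := (integrable_const 1).add hlin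
  have hsq : Integrable (fun ω ↦ c * X ω ^ 2) μ := hX.integrable_sq.const_mul c
  have hpointwise : ∀ᵐ ω ∂μ, exp (t * X ω) ≤ 1 + t * X ω + c * X ω ^ 2 := by
    filter_upwards [hXb] with ω hω
    convert! exp_le_one_add_add_mul_sq (mul_pos ht hb) (mul_le_mul_of_nonneg_left hω ht.le) using 2
    rw [hc]
    field_simp
  calc mgf X μ t ≤ ∫ ω, (1 + t * X ω + c * X ω ^ 2) ∂μ :=
        integral_mono_of_nonneg (ae_of_all _ fun _ ↦ (exp_pos _).le)
          (haffine.add hsq) hpointwise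
    _ = t * ∫ ω, X ω ∂μ + c * ∫ ω, X ω ^ 2 ∂μ + 1 := by
        rw [integral_add haffine hsq, integral_add (integrable_const 1) hlin,
          integral_const_mul, integral_const_mul, integral_const, probReal_univ, one_smul]
        ring
    _ ≤ _ := add_one_le_exp _

lemma mgf_sum_le_exp_of_le {X : ι → Ω → ℝ} (hindep : iIndepFun X μ)
    (hX : ∀ i, MemLp (X i) 2 μ) (hXb : ∀ i, ∀ᵐ ω ∂μ, X i ω ≤ b) (hb : 0 < b) (ht : 0 < t)
    (s : Finset ι) :
    mgf (∑ i ∈ s, X i) μ t ≤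
      exp (∑ i ∈ s,
        (t * ∫ ω, X i ω ∂μ + (exp (t * b) - 1 - t * b) / b ^ 2 * ∫ ω, X i ω ^ 2 ∂μ)) := by
  have := hindep.isProbabilityMeasure
  rw [hindep.mgf_sum₀ (fun i ↦ (hX i).aemeasurable), exp_sum]
  exact Finset.prod_le_prod (fun _ _ ↦ mgf_nonneg)
    fun i _ ↦ mgf_le_exp_of_le (hX i) (hXb i) hb ht

end Bennett

section Truncation

variable {Ω : Type*} {n : ℕ} {ξ : Fin n → Ω → ℝ}

lemma xbar_le_one (ξ : Fin n → Ω → ℝ) (i : Fin n) (ω : Ω) : xbar ξ i ω ≤ 1 := by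
  unfold xbar
  split_ifs with h
  exacts [h, zero_le_one]

lemma xbar_le (ξ : Fin n → Ω → ℝ) (i : Fin n) (ω : Ω) : xbar ξ i ω ≤ ξ i ω := by
  unfold xbar
  split_ifs with h
  exacts [le_rfl, zero_le_one.trans (not_le.1 h).le]

lemma abs_xbar_le (ξ : Fin n → Ω → ℝ) (i : Fin n) (ω : Ω) : |xbar ξ i ω| ≤ |ξ i ω| := by
  unfold xbar
  split_ifs
  exacts [le_rfl, abs_zero.trans_le (abs_nonneg _)]

lemma Wbar_le (ξ : Fin n → Ω → ℝ) (ω : Ω) : Wbar ξ ω ≤ n := by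
  simpa [Wbar] using Finset.sum_le_sum fun i (_ : i ∈ Finset.univ) ↦ xbar_le_one ξ i ω

lemma measurable_ite_le_one : Measurable fun x : ℝ ↦ if x ≤ 1 then x else 0 :=
  measurable_id.ite measurableSet_Iic measurable_const

variable [MeasurableSpace Ω] {μ : Measure Ω}

lemma aemeasurable_xbar {i : Fin n} (hξ : AEMeasurable (ξ i) μ) : AEMeasurable (xbar ξ i) μ :=
  measurable_ite_le_one.comp_aemeasurable hξ

lemma aemeasurable_Wbar (hξ : ∀ i, AEMeasurable (ξ i) μ) : AEMeasurable (Wbar ξ) μ :=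
  Finset.aemeasurable_fun_sum _ fun i _ ↦ aemeasurable_xbar (hξ i)

lemma memLp_xbar {i : Fin n} {p : ENNReal} (hξ : MemLp (ξ i) p μ) : MemLp (xbar ξ i) p μ :=
  hξ.mono (aemeasurable_xbar hξ.aemeasurable).aestronglyMeasurable
    (ae_of_all _ (abs_xbar_le ξ i))

lemma iIndepFun_xbar (hindep : iIndepFun ξ μ) : iIndepFun (xbar ξ) μ :=
  hindep.comp (fun _ x ↦ if x ≤ 1 then x else 0) fun _ ↦ measurable_ite_le_one

lemma integrable_exp_Wbar [IsFiniteMeasure μ] (hξ : ∀ i, AEMeasurable (ξ i) μ) :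
    Integrable (fun ω ↦ exp (Wbar ξ ω)) μ := by
  simpa only [one_mul] using
    integrable_exp_mul_of_le 1 n zero_le_one (aemeasurable_Wbar hξ) (ae_of_all _ (Wbar_le ξ))

lemma integral_exp_Wbar_le (hindep : iIndepFun ξ μ) (hL2 : ∀ i, MemLp (ξ i) 2 μ) :
    ∫ ω, exp (Wbar ξ ω) ∂μ ≤
      exp (∑ i, (∫ ω, ξ i ω ∂μ + (exp 1 - 2) * ∫ ω, ξ i ω ^ 2 ∂μ)) := by
  have := hindep.isProbabilityMeasure
  have hxL2 (i : Fin n) : MemLp (xbar ξ i) 2 μ := memLp_xbar (hL2 i)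
  have hmean (i : Fin n) : ∫ ω, xbar ξ i ω ∂μ ≤ ∫ ω, ξ i ω ∂μ :=
    integral_mono ((hxL2 i).integrable one_le_two) ((hL2 i).integrable one_le_two) (xbar_le ξ i)
  have hsq (i : Fin n) : ∫ ω, xbar ξ i ω ^ 2 ∂μ ≤ ∫ ω, ξ i ω ^ 2 ∂μ :=
    integral_mono (hxL2 i).integrable_sq (hL2 i).integrable_sq
      fun ω ↦ sq_le_sq.2 (abs_xbar_le ξ i ω)
  have he : 0 ≤ exp 1 - 2 := by linarith [exp_one_gt_two]
  have hbennett := mgf_sum_le_exp_of_le (iIndepFun_xbar hindep) hxL2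
    (fun i ↦ ae_of_all _ (xbar_le_one ξ i)) one_pos one_pos Finset.univ
  simp only [one_mul, one_pow, div_one, sub_sub, one_add_one_eq_two] at hbennett
  calc ∫ ω, exp (Wbar ξ ω) ∂μ = mgf (∑ i, xbar ξ i) μ 1 := by
        simp only [mgf, Wbar, one_mul, Finset.sum_apply]
    _ ≤ exp (∑ i, (∫ ω, xbar ξ i ω ∂μ + (exp 1 - 2) * ∫ ω, xbar ξ i ω ^ 2 ∂μ)) :=
        hbennett
    _ ≤ exp (∑ i, (∫ ω, ξ i ω ∂μ + (exp 1 - 2) * ∫ ω, ξ i ω ^ 2 ∂μ)) := by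
        refine exp_le_exp.2 (Finset.sum_le_sum fun i _ ↦ add_le_add (hmean i) ?_)
        exact mul_le_mul_of_nonneg_left (hsq i) he

theorem expectation_abs_fz'_bound_general (hindep : iIndepFun ξ μ)
    (hL2 : ∀ i, MemLp (ξ i) 2 μ) {z : ℝ} (hz : 2 ≤ z) :
    ∫ ω, |fz' z (Wbar ξ ω)| ∂μ ≤
      (1 / 2 * exp (-(1 / 2)) + exp (-1) / (2 * √(2 * π))
          + exp (∑ i, (∫ ω, ξ i ω ∂μ + (exp 1 - 2) * ∫ ω, ξ i ω ^ 2 ∂μ)))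
        * exp (-z / 2) := by
  have := hindep.isProbabilityMeasure
  refine (integral_abs_fz'_le (integrable_exp_Wbar fun i ↦ (hL2 i).aemeasurable) hz).trans ?_
  gcongr
  exact integral_exp_Wbar_le hindep hL2

end Truncation

/-- Bound on E|f_z'(Wbar)| for z > 2. -/
theorem expectation_abs_fz'_bound
    {Ω : Type*} [MeasureSpace Ω] [IsProbabilityMeasure (ℙ : Measure Ω)]
    {n : ℕ} (ξ : Fin n → Ω → ℝ)
    (hmeas : ∀ i, Measurable (ξ i))
    (hindep : iIndepFun ξ ℙ)
    (hL2 : ∀ i, MemLp (ξ i) 2 ℙ)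
    (hmean : ∀ i, ∫ ω, ξ i ω = 0)
    (hvar : ∑ i, ∫ ω, (ξ i ω) ^ 2 = 1)
    (z : ℝ) (hz : 2 < z) :
    (∫ ω, |fz' z (Wbar ξ ω)|)
      ≤ ((1 / 2) * Real.exp (-(1 / 2) : ℝ)
            + Real.exp (-1 : ℝ) / (2 * Real.sqrt (2 * Real.pi))
            + Real.exp (Real.exp 1 - 2))
          * Real.exp (-z / 2) := by
  simpa only [hmean, zero_add, ← Finset.mul_sum, hvar, mul_one]
    using expectation_abs_fz'_bound_general hindep hL2 hz.le
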